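/- Let 𝔪 ≤ 𝔪̃ be eigenvalue multiplicity vectors for n, let D_λ ∈ F(𝔪) be a diagonal matrix with nondecreasing diagonal entries, and let V ⊆ Sym₀(n) be a linear subspace with τ(D_λ) + V = Sym₀(n). Then there exists ε > 0 such that for every S ∈ F(𝔪̃) with ‖S − D_λ‖ < ε one has τ(S) + V = Sym₀(n). -/

import Mathlib

open Matrix

/-- `Sym₀(n)`: symmetric traceless real `n×n` matrices. -/
def Sym0 (n : ℕ) : Set (Matrix (Fin n) (Fin n) ℝ) := {X | X.IsSymm ∧ X.trace = 0}

/-- The eigenspace of a matrix `S` for the value `μ`. -/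
noncomputable def eigSp {n : ℕ} (S : Matrix (Fin n) (Fin n) ℝ) (μ : ℝ) :
    Submodule ℝ (Fin n → ℝ) :=
  Module.End.eigenspace (Matrix.toLin' S) μ

/-- `ν(S)`: symmetric traceless matrices mapping each eigenspace of `S` into itself,
with trace-zero restriction to each eigenspace of `S`. -/
noncomputable def nuSpace {n : ℕ} (S : Matrix (Fin n) (Fin n) ℝ) :
    Set (Matrix (Fin n) (Fin n) ℝ) :=
  {X | X ∈ Sym0 n ∧ ∀ μ : ℝ,
    ∃ h : ∀ v ∈ eigSp S μ, (Matrix.toLin' X) v ∈ eigSp S μ,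
      LinearMap.trace ℝ ↥(eigSp S μ) ((Matrix.toLin' X).restrict h) = 0}

/-- `τ(S)`: the orthogonal complement of `ν(S)` in `Sym₀(n)` with respect to
`⟨S₁,S₂⟩ = tr(S₁·S₂)`. -/
noncomputable def tauSpace {n : ℕ} (S : Matrix (Fin n) (Fin n) ℝ) :
    Set (Matrix (Fin n) (Fin n) ℝ) :=
  {X | X ∈ Sym0 n ∧ ∀ Y ∈ nuSpace S, (X * Y).trace = 0}

/-- `S` has multiplicity type given by the monotone surjective map `π : Fin n → Fin L`:
`S` is orthogonally diagonalizable with nondecreasing eigenvalues `λ₁ ≤ ⋯ ≤ λ_n` such that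
`λ_a = λ_b` iff `π a = π b`. -/
def MultType {n L : ℕ} (π : Fin n → Fin L) (S : Matrix (Fin n) (Fin n) ℝ) : Prop :=
  ∃ lam : Fin n → ℝ, Monotone lam ∧ (∀ a b, lam a = lam b ↔ π a = π b) ∧
    ∃ P : Matrix (Fin n) (Fin n) ℝ, Pᵀ * P = 1 ∧ S = P * Matrix.diagonal lam * Pᵀ

/-- The face `F(𝔪) ⊆ Sym₀(n)`: traceless matrices of multiplicity type `𝔪`. -/
def Face {n L : ℕ} (π : Fin n → Fin L) : Set (Matrix (Fin n) (Fin n) ℝ) :=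
  {S | S.trace = 0 ∧ MultType π S}

/-- The multiplicity `m_i`, i.e. the cardinality of the fiber `π⁻¹(i)`. -/
def multCard {n L : ℕ} (π : Fin n → Fin L) (i : Fin L) : ℕ :=
  (Finset.univ.filter fun a => π a = i).card

/-- `𝔪 ≤ 𝔪̃` : there is a surjective nondecreasing `J` with `m_i = Σ_{j ∈ J⁻¹(i)} m̃_j`.
Here `π` encodes `𝔪` and `π'` encodes `𝔪̃`. -/
def MultLE {n L L' : ℕ} (π : Fin n → Fin L) (π' : Fin n → Fin L') : Prop :=
  ∃ J : Fin L' → Fin L, Monotone J ∧ Function.Surjective J ∧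
    ∀ i : Fin L, multCard π i = ∑ j ∈ Finset.univ.filter (fun j => J j = i), multCard π' j

/-- The norm induced by the inner product `⟨S₁,S₂⟩ = tr(S₁·S₂)` (Frobenius norm). -/
noncomputable def frobNorm {n : ℕ} (X : Matrix (Fin n) (Fin n) ℝ) : ℝ :=
  Real.sqrt ((X * Xᵀ).trace)

/-!
For diagonalizable `S`, a matrix preserves every eigenspace of `S` iff it commutes with `S`, and
interpolating on the spectrum shows that its traces on the eigenspaces all vanish iff it is
trace-orthogonal to every polynomial in `S`. Hence `X ∈ ν(S)` is a closed condition on the pair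
`(X, S)`. Dually, `τ(S) + V = Sym₀(n)` says that no nonzero element of `ν(S)` is orthogonal to `V`,
and by compactness of the unit sphere this is an open condition on `S`.
-/

section Eigenspaces

open Module Module.End

variable {R K M : Type*} [AddCommGroup M]

lemma commute_of_forall_mapsTo_eigenspace [CommRing R] [Module R M] {f g : End R M}
    (hf : ⨆ μ, f.eigenspace μ = ⊤)
    (hg : ∀ μ, ∀ v ∈ f.eigenspace μ, g v ∈ f.eigenspace μ) : Commute g f := by
  have hle : ⊤ ≤ LinearMap.eqLocus (g * f) (f * g) := by
    refine hf ▸ iSup_le fun μ v hv ↦ ?_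
    have hgv := mem_eigenspace_iff.mp (hg μ v hv)
    simp only [LinearMap.mem_eqLocus, End.mul_apply, hgv, mem_eigenspace_iff.mp hv, map_smul]
  exact LinearMap.ext fun v ↦ hle Submodule.mem_top

variable [Field K] [Module K M] [FiniteDimensional K M]

lemma trace_mul_aeval_eq_sum {f g : End K M} (hf : ⨆ μ, f.eigenspace μ = ⊤)
    (hg : ∀ μ, ∀ v ∈ f.eigenspace μ, g v ∈ f.eigenspace μ) (p : Polynomial K) :
    LinearMap.trace K M (g * Polynomial.aeval f p) =
      ∑ μ ∈ (finite_hasEigenvalue f).toFinset,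
        p.eval μ * LinearMap.trace K (f.eigenspace μ) (g.restrict (hg μ)) := by
  classical
  have hinternal : DirectSum.IsInternal f.eigenspace :=
    DirectSum.isInternal_submodule_of_iSupIndep_of_iSup_eq_top f.eigenspaces_iSupIndep hf
  have happly : ∀ μ, ∀ v ∈ f.eigenspace μ,
      (g * Polynomial.aeval f p) v = p.eval μ • g v := fun μ v hv ↦ by
    rw [End.mul_apply, aeval_apply_of_mem_apply_eq_smul (mem_eigenspace_iff.mp hv), map_smul]
  have hmaps : ∀ μ, Set.MapsTo (g * Polynomial.aeval f p) (f.eigenspace μ) (f.eigenspace μ) :=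
    fun μ v hv ↦ happly μ v hv ▸ Submodule.smul_mem _ _ (hg μ v hv)
  have hrestrict : ∀ μ, (g * Polynomial.aeval f p).restrict (hmaps μ) =
      p.eval μ • g.restrict (hg μ) := fun μ ↦
    LinearMap.ext fun v ↦ Subtype.ext (happly μ v v.2)
  rw [LinearMap.trace_eq_sum_trace_restrict' hinternal (finite_hasEigenvalue f) hmaps]
  simp only [hrestrict, map_smul, smul_eq_mul]
  rfl

lemma forall_trace_restrict_eigenspace_eq_zero_iff {f g : End K M}
    (hf : ⨆ μ, f.eigenspace μ = ⊤)
    (hg : ∀ μ, ∀ v ∈ f.eigenspace μ, g v ∈ f.eigenspace μ) :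
    (∀ μ, LinearMap.trace K (f.eigenspace μ) (g.restrict (hg μ)) = 0) ↔
      ∀ p : Polynomial K, LinearMap.trace K M (g * Polynomial.aeval f p) = 0 := by
  classical
  refine ⟨fun h p ↦ ?_, fun h μ ↦ ?_⟩
  · simp only [trace_mul_aeval_eq_sum hf hg, h, mul_zero, Finset.sum_const_zero]
  set s := (finite_hasEigenvalue f).toFinset
  by_cases hμ : μ ∈ s
  · have hsum := trace_mul_aeval_eq_sum hf hg (Lagrange.basis s id μ)
    have hself : (Lagrange.basis s id μ).eval μ = 1 :=
      Lagrange.eval_basis_self (v := id) (Set.injOn_id _) hμ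
    have hne : ∀ ν ∈ s, ν ≠ μ → (Lagrange.basis s id μ).eval ν = 0 := fun ν hν hνμ ↦
      Lagrange.eval_basis_of_ne (v := id) hνμ.symm hν
    rw [h, Finset.sum_eq_single_of_mem μ hμ fun ν hν hνμ ↦ by rw [hne ν hν hνμ, zero_mul],
      hself, one_mul] at hsum
    exact hsum.symm
  · have hbot : f.eigenspace μ = ⊥ :=
      of_not_not fun hne ↦ hμ ((finite_hasEigenvalue f).mem_toFinset.mpr hne)
    have : Subsingleton (f.eigenspace μ) := Submodule.subsingleton_iff_eq_bot.mpr hbot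
    rw [Subsingleton.elim (g.restrict (hg μ)) 0, map_zero]

end Eigenspaces

section InnerProductSpace

variable {𝕜 E : Type*} [RCLike 𝕜] [NormedAddCommGroup E] [InnerProductSpace 𝕜 E]

lemma orthogonal_inf_eq_bot_iff_eq {K W : Submodule 𝕜 E} [K.HasOrthogonalProjection]
    (hK : K ≤ W) : Kᗮ ⊓ W = ⊥ ↔ K = W := by
  refine ⟨fun h ↦ ?_, fun h ↦ ?_⟩
  · rw [← Submodule.sup_orthogonal_inf_of_hasOrthogonalProjection hK, h, sup_bot_eq]
  · rw [h, inf_comm, W.inf_orthogonal_eq_bot]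

variable [FiniteDimensional 𝕜 E]

lemma orthogonal_inf_orthogonal_inf_of_le {N W : Submodule 𝕜 E} (hN : N ≤ W) :
    (Nᗮ ⊓ W)ᗮ ⊓ W = N := by
  have hsup : (Nᗮ ⊓ W)ᗮ = N ⊔ Wᗮ := by
    rw [← (N ⊔ Wᗮ).orthogonal_orthogonal, ← N.inf_orthogonal, W.orthogonal_orthogonal]
  rw [hsup, sup_inf_assoc_of_le _ hN, inf_comm, W.inf_orthogonal_eq_bot, sup_bot_eq]

lemma le_orthogonal_inf_sup_iff_disjoint {N W : Submodule 𝕜 E} (hN : N ≤ W)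
    (V : Submodule 𝕜 E) : W ≤ Nᗮ ⊓ W ⊔ V ↔ Disjoint N (V ⊓ W)ᗮ := by
  have hT : Nᗮ ⊓ W ≤ W := inf_le_right
  calc W ≤ Nᗮ ⊓ W ⊔ V
      ↔ Nᗮ ⊓ W ⊔ V ⊓ W = W := by rw [← inf_eq_right, sup_inf_assoc_of_le _ hT]
    _ ↔ (Nᗮ ⊓ W ⊔ V ⊓ W)ᗮ ⊓ W = ⊥ :=
      (orthogonal_inf_eq_bot_iff_eq (sup_le hT inf_le_right)).symm
    _ ↔ N ⊓ (V ⊓ W)ᗮ = ⊥ := by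
      rw [← Submodule.inf_orthogonal, inf_right_comm, orthogonal_inf_orthogonal_inf_of_le hN]
    _ ↔ Disjoint N (V ⊓ W)ᗮ := disjoint_iff.symm

end InnerProductSpace

lemma isOpen_setOf_eq_bot_of_isClosed {𝕜 E T : Type*} [RCLike 𝕜] [NormedAddCommGroup E]
    [NormedSpace 𝕜 E] [FiniteDimensional 𝕜 E] [TopologicalSpace T] {N : T → Submodule 𝕜 E}
    (hN : IsClosed {q : E × T | q.1 ∈ N q.2}) : IsOpen {t | N t = ⊥} := by
  have : ProperSpace E := FiniteDimensional.proper 𝕜 E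
  have : CompactSpace (Metric.sphere (0 : E) 1) :=
    isCompact_iff_compactSpace.mp (isCompact_sphere 0 1)
  let C : Set (Metric.sphere (0 : E) 1 × T) := {q | (q.1 : E) ∈ N q.2}
  have hC : IsClosed C := hN.preimage (continuous_subtype_val.prodMap continuous_id)
  have himage : Prod.snd '' C = {t | N t = ⊥}ᶜ := by
    ext t
    constructor
    · rintro ⟨⟨⟨x, hx⟩, t⟩, hxt, rfl⟩ (hbot : N t = ⊥)
      have hx0 : x = 0 := by simpa [C, hbot] using hxt
      simp [hx0] at hx
    · intro ht
      obtain ⟨x, hxt, hx0⟩ := Submodule.exists_mem_ne_zero_of_ne_bot ht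
      exact ⟨(⟨((‖x‖ : 𝕜)⁻¹) • x, by simp [norm_smul_inv_norm hx0]⟩, t),
        (N t).smul_mem _ hxt, rfl⟩
  exact isClosed_compl_iff.mp (himage ▸ isClosedMap_snd_of_compactSpace C hC)

lemma trace_toLin'_mul_aeval {R m : Type*} [CommRing R] [Fintype m] [DecidableEq m]
    (A B : Matrix m m R) (p : Polynomial R) :
    LinearMap.trace R (m → R) (toLin' A * Polynomial.aeval (toLin' B) p) =
      (A * Polynomial.aeval B p).trace := by
  have haeval : Polynomial.aeval (toLin' B) p = toLin' (Polynomial.aeval B p) :=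
    Polynomial.aeval_algHom_apply (toLinAlgEquiv' : Matrix m m R ≃ₐ[R] _).toAlgHom B p
  rw [haeval, Module.End.mul_eq_comp, ← toLin'_mul, trace_toLin'_eq]

section NormalSpace

variable {n : ℕ} {S : Matrix (Fin n) (Fin n) ℝ}

lemma iSup_eigSp_mul_diagonal_mul {P Q : Matrix (Fin n) (Fin n) ℝ} (hQP : Q * P = 1)
    (d : Fin n → ℝ) : ⨆ μ, eigSp (P * diagonal d * Q) μ = ⊤ := by
  let b := (Pi.basisFun ℝ (Fin n)).map (toLin'OfInv hQP (mul_eq_one_comm.mp hQP))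
  refine (Submodule.eq_top_iff_forall_basis_mem b).mpr fun j ↦ Submodule.mem_iSup_of_mem (d j) ?_
  have hb : b j = P *ᵥ Pi.single j 1 := by simp [b, toLin'OfInv]
  have hPdQ : (P * diagonal d * Q) * P = P * diagonal d := by rw [mul_assoc _ Q, hQP, mul_one]
  rw [eigSp, Module.End.mem_eigenspace_iff, toLin'_apply, hb, mulVec_mulVec, hPdQ,
    ← mulVec_mulVec, diagonal_mulVec_single, mul_one, ← mulVec_smul, ← Pi.single_smul,
    smul_eq_mul, mul_one]

/-- `Sym₀(n)` as a linear subspace. -/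
def sym0Submodule (n : ℕ) : Submodule ℝ (Matrix (Fin n) (Fin n) ℝ) where
  carrier := Sym0 n
  zero_mem' := ⟨isSymm_zero, trace_zero _ _⟩
  add_mem' hX hY := ⟨hX.1.add hY.1, by rw [trace_add, hX.2, hY.2, add_zero]⟩
  smul_mem' c _ hX := ⟨hX.1.smul c, by rw [trace_smul, hX.2, smul_zero]⟩

/-- The normal space `ν(S)` of a diagonalizable `S`, described through the polynomials in `S`.
It is defined for every `S`, so that its graph is a closed set. -/
def normalSubmodule (S : Matrix (Fin n) (Fin n) ℝ) : Submodule ℝ (Matrix (Fin n) (Fin n) ℝ) where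
  carrier := {X | X ∈ Sym0 n ∧ Commute X S ∧
    ∀ p : Polynomial ℝ, (X * Polynomial.aeval S p).trace = 0}
  zero_mem' := ⟨(sym0Submodule n).zero_mem, Commute.zero_left S, by simp⟩
  add_mem' hX hY := ⟨(sym0Submodule n).add_mem hX.1 hY.1, hX.2.1.add_left hY.2.1, fun p ↦ by
    rw [add_mul, trace_add, hX.2.2, hY.2.2, add_zero]⟩
  smul_mem' c X hX := ⟨(sym0Submodule n).smul_mem c hX.1, hX.2.1.smul_left c, fun p ↦ by
    rw [smul_mul_assoc, trace_smul, hX.2.2, smul_zero]⟩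

lemma normalSubmodule_le_sym0Submodule (S : Matrix (Fin n) (Fin n) ℝ) :
    normalSubmodule S ≤ sym0Submodule n := fun _ hX ↦ hX.1

lemma nuSpace_eq_normalSubmodule (hS : ⨆ μ, eigSp S μ = ⊤) :
    nuSpace S = normalSubmodule S := by
  ext X
  constructor
  · rintro ⟨hX, h⟩
    choose hmaps htrace using h
    have hcomm := commute_of_forall_mapsTo_eigenspace hS hmaps
    refine ⟨hX, toLinAlgEquiv'.injective ?_, fun p ↦ ?_⟩
    · rw [map_mul, map_mul]
      exact hcomm.eq
    · rw [← trace_toLin'_mul_aeval]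
      exact (forall_trace_restrict_eigenspace_eq_zero_iff hS hmaps).mp htrace p
  · rintro ⟨hX, hcomm, htrace⟩
    have hmaps : ∀ μ, ∀ v ∈ eigSp S μ, toLin' X v ∈ eigSp S μ := fun μ ↦
      Module.End.mapsTo_genEigenspace_of_comm (hcomm.symm.map toLinAlgEquiv') μ 1
    simp only [← trace_toLin'_mul_aeval] at htrace
    exact ⟨hX, fun μ ↦ ⟨hmaps μ,
      (forall_trace_restrict_eigenspace_eq_zero_iff hS hmaps).mpr htrace μ⟩⟩

end NormalSpace

section Frobenius

open scoped Matrix.Norms.Frobenius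

/-- The Frobenius inner product `⟪A, B⟫ = tr(Aᵀ B)`. -/
noncomputable abbrev frobeniusInnerProductSpace {m n : Type*} [Fintype m] [Fintype n] :
    InnerProductSpace ℝ (Matrix m n ℝ) where
  inner A B := (Aᵀ * B).trace
  norm_sq_eq_re_inner A := by
    rw [frobenius_norm_def, ← Real.sqrt_eq_rpow, Real.sq_sqrt (by positivity), Finset.sum_comm]
    simp [trace, mul_apply, sq]
  conj_inner_symm A B := by
    rw [← trace_transpose, transpose_mul, transpose_transpose, conj_trivial]
  add_left A B C := by simp [Matrix.add_mul]
  smul_left A B r := by simp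

attribute [local instance] frobeniusInnerProductSpace

variable {n : ℕ} {S : Matrix (Fin n) (Fin n) ℝ}

lemma frobNorm_eq_norm (X : Matrix (Fin n) (Fin n) ℝ) : frobNorm X = ‖X‖ := by
  rw [frobNorm, norm_eq_sqrt_real_inner, trace_mul_comm]
  rfl

lemma isClosed_setOf_mem_normalSubmodule :
    IsClosed {q : Matrix (Fin n) (Fin n) ℝ × Matrix (Fin n) (Fin n) ℝ |
      q.1 ∈ normalSubmodule q.2} := by
  have hsym : IsClosed {q : Matrix (Fin n) (Fin n) ℝ × Matrix (Fin n) (Fin n) ℝ | q.1 ∈ Sym0 n} :=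
    (sym0Submodule n).closed_of_finiteDimensional.preimage continuous_fst
  have hcomm : IsClosed {q : Matrix (Fin n) (Fin n) ℝ × Matrix (Fin n) (Fin n) ℝ |
      q.1 * q.2 = q.2 * q.1} := isClosed_eq (by fun_prop) (by fun_prop)
  have htrace : IsClosed {q : Matrix (Fin n) (Fin n) ℝ × Matrix (Fin n) (Fin n) ℝ |
      ∀ p : Polynomial ℝ, (q.1 * Polynomial.aeval q.2 p).trace = 0} :=
    Set.ofPred_forall _ ▸ isClosed_iInter fun p ↦ isClosed_eq ((continuous_fst.mul
      (p.continuous_aeval.comp continuous_snd)).matrix_trace) continuous_const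
  exact hsym.inter (hcomm.inter htrace)

lemma tauSpace_eq_orthogonal_inf (hS : ⨆ μ, eigSp S μ = ⊤) :
    tauSpace S = ((normalSubmodule S)ᗮ ⊓ sym0Submodule n : Submodule ℝ _) := by
  ext X
  have hinner : ∀ Y ∈ normalSubmodule S, inner ℝ Y X = (X * Y).trace := fun Y hY ↦ calc
    inner ℝ Y X = (Yᵀ * X).trace := rfl
    _ = (X * Y).trace := by rw [hY.1.1.eq, trace_mul_comm]
  have horth : X ∈ (normalSubmodule S)ᗮ ↔ ∀ Y ∈ normalSubmodule S, (X * Y).trace = 0 :=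
    forall₂_congr fun Y hY ↦ by rw [hinner Y hY]
  rw [tauSpace, nuSpace_eq_normalSubmodule hS, SetLike.mem_coe, Submodule.mem_inf, horth]
  exact and_comm

lemma forall_mem_sym0_exists_add_iff_disjoint (hS : ⨆ μ, eigSp S μ = ⊤)
    (V : Submodule ℝ (Matrix (Fin n) (Fin n) ℝ)) :
    (∀ X ∈ Sym0 n, ∃ Y ∈ tauSpace S, ∃ Z ∈ (V : Set _), X = Y + Z) ↔
      Disjoint (normalSubmodule S) (V ⊓ sym0Submodule n)ᗮ := by
  rw [← le_orthogonal_inf_sup_iff_disjoint (normalSubmodule_le_sym0Submodule S),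
    tauSpace_eq_orthogonal_inf hS]
  simp only [SetLike.le_def, Submodule.mem_sup, SetLike.mem_coe, eq_comm]
  rfl

theorem transversality_persists_general {D : Matrix (Fin n) (Fin n) ℝ}
    (hD : ⨆ μ, eigSp D μ = ⊤) (V : Submodule ℝ (Matrix (Fin n) (Fin n) ℝ))
    (htrans : ∀ X ∈ Sym0 n, ∃ Y ∈ tauSpace D, ∃ Z ∈ (V : Set _), X = Y + Z) :
    ∃ ε > (0 : ℝ), ∀ S, ⨆ μ, eigSp S μ = ⊤ → frobNorm (S - D) < ε →
      ∀ X ∈ Sym0 n, ∃ Y ∈ tauSpace S, ∃ Z ∈ (V : Set _), X = Y + Z := by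
  have hopen : IsOpen {S | Disjoint (normalSubmodule S) (V ⊓ sym0Submodule n)ᗮ} := by
    simp only [disjoint_iff]
    exact isOpen_setOf_eq_bot_of_isClosed (isClosed_setOf_mem_normalSubmodule.inter
      ((V ⊓ sym0Submodule n).isClosed_orthogonal.preimage continuous_fst))
  obtain ⟨ε, hε, hball⟩ :=
    Metric.isOpen_iff.mp hopen D ((forall_mem_sym0_exists_add_iff_disjoint hD V).mp htrans)
  refine ⟨ε, hε, fun S hS hSD ↦ (forall_mem_sym0_exists_add_iff_disjoint hS V).mpr (hball ?_)⟩
  rwa [mem_ball_iff_norm, ← frobNorm_eq_norm]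

end Frobenius

/-- transversality of a subspace `V` to the face tangent space at `D_λ`
persists at nearby points of an adjacent face `F(𝔪̃)`. -/
theorem transversality_persists (n L Lt : ℕ)
    (π : Fin n → Fin L) (hπmono : Monotone π) (hπsurj : Function.Surjective π)
    (πt : Fin n → Fin Lt) (hπtmono : Monotone πt) (hπtsurj : Function.Surjective πt)
    (hle : MultLE π πt)
    (lam : Fin n → ℝ) (hlam : Monotone lam) (hlamsum : ∑ a, lam a = 0)
    (hpattern : ∀ a b, lam a = lam b ↔ π a = π b)
    (V : Submodule ℝ (Matrix (Fin n) (Fin n) ℝ)) (hV : (V : Set _) ⊆ Sym0 n)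
    (htrans : ∀ X ∈ Sym0 n, ∃ Y ∈ tauSpace (Matrix.diagonal lam), ∃ Z ∈ (V : Set _), X = Y + Z) :
    ∃ ε > (0 : ℝ), ∀ S ∈ Face πt, frobNorm (S - Matrix.diagonal lam) < ε →
      ∀ X ∈ Sym0 n, ∃ Y ∈ tauSpace S, ∃ Z ∈ (V : Set _), X = Y + Z := by
  obtain ⟨ε, hε, h⟩ := transversality_persists_general
    (iSup_eigenspace_toLin'_diagonal_eq_top lam) V htrans
  exact ⟨ε, hε, fun S ⟨_, _, _, _, P, hP, hS⟩ ↦ h S (hS ▸ iSup_eigSp_mul_diagonal_mul hP _)⟩
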